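/- For each x = (x_1,…,x_d) ∈ X_∞^d and each ℓ > max{ℓ(x_i) : i = 1,…,d}, the set {j ≥ 0 : (T^{×d})^j x ∈ C_{n_ℓ+1}^d} is infinite. -/

import Mathlib

/-!
The return times are `j = h_m` with `m = n_{ℓ'} - ℓ'` and `ℓ' > ℓ` arbitrary. Between towers `m`
and `n_{ℓ'}` only Chacon spacers are inserted, so two consecutive occurrences of tower `m` inside
tower `n_{ℓ'}` are separated by at most one level. A point `x` of `X_∞` lying in level `j` of
tower `m` is not in the last occurrence, hence `T^{h_m} x` lies in level `j` or `j - 1` of tower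
`m` (`iterate_hgt`). The displacement is at most one level whatever the number `d` of coordinates
is, so all coordinates can be treated separately with the same time `h_m`.

Finally `x` does not lie in the bottom level of tower `n_ℓ + 1`, since otherwise it would be in the
first occurrence of tower `n_ℓ - ℓ` inside tower `n_ℓ`. Therefore moving down by one level in tower
`m` keeps the point inside tower `n_ℓ + 1`.
-/


open MeasureTheory Set Filter Topology
open scoped ENNReal
open scoped Classical

noncomputable section

/-! ## The nearly finite Chacon transformation: symbolic model -/

/-- The alphabet `{*} ∪ ℕ` is modelled by `Option ℕ`, `none` playing the role of `*`. -/
instance optionNatTop : TopologicalSpace (Option ℕ) := ⊥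

/-- The data of the two sequences `(n_ℓ)` and `(ℓ_k)` used in the construction of the
nearly finite Chacon transformation, together with the growth conditions imposed on them. -/
structure NFCseq where
  nseq : ℕ → ℕ
  lseq : ℕ → ℕ
  nseq_zero : nseq 0 = 0
  lseq_zero : lseq 0 = 1
  lseq_strictMono : StrictMono lseq
  nseq_growth : ∀ ℓ : ℕ, 1 ≤ ℓ → nseq (ℓ - 1) + 2 * ℓ < nseq ℓ
  lseq_growth : ∀ k : ℕ, (2 : ℝ) ≤ (1 + ((7 : ℝ) ^ k)⁻¹) ^ (lseq (k + 1) - lseq k)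

namespace NFCseq

/-- `k(ℓ)`: the unique `k` with `ℓ_k ≤ ℓ < ℓ_{k+1}`. -/
def kOf (P : NFCseq) (ℓ : ℕ) : ℕ := sSup {k | P.lseq k ≤ ℓ}

/-- The heights `h_n` of the towers. -/
def hgt (P : NFCseq) : ℕ → ℕ
  | 0 => 1
  | n + 1 =>
    3 * P.hgt n +
      3 * (if hn : ∃ ℓ, 1 ≤ ℓ ∧ P.nseq ℓ = n then P.hgt (n - P.kOf (Nat.find hn)) else 0) + 1
termination_by n => n
decreasing_by all_goals omega

theorem hgt_pos (P : NFCseq) (n : ℕ) : 0 < P.hgt n := by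
  cases n with
  | zero => simp [hgt]
  | succ n => rw [hgt]; omega

/-- The number of spacers put above the first subcolumn at step `n+1`
(`h_{n-k(ℓ)}` if `n = n_ℓ`, and `0` otherwise). -/
def spa (P : NFCseq) (n : ℕ) : ℕ :=
  if hn : ∃ ℓ, 1 ≤ ℓ ∧ P.nseq ℓ = n then P.hgt (n - P.kOf (Nat.find hn)) else 0

/-- The map `p_n` sending the index of a level of tower `n+1` to the index of the level of
tower `n` containing it (`none` if that level lies outside tower `n`). -/
def pmap (P : NFCseq) (n j : ℕ) : Option ℕ :=
  if j < P.hgt n then some j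
  else if j < P.hgt n + P.spa n then none
  else if j < 2 * P.hgt n + P.spa n then some (j - (P.hgt n + P.spa n))
  else if j < 2 * P.hgt n + 2 * P.spa n + 1 then none
  else if j < 3 * P.hgt n + 2 * P.spa n + 1 then some (j - (2 * P.hgt n + 2 * P.spa n + 1))
  else none

/-- The defining property of points of the space `X`. -/
def Xspec (P : NFCseq) (x : ℕ → Option ℕ) : Prop :=
  (∀ n, x n = (x (n + 1)).bind (P.pmap n)) ∧ ∃ n, x n ≠ none

/-- The space `X` of the symbolic model, with its product (subspace) topology. -/
abbrev Xpt (P : NFCseq) : Type := {x : ℕ → Option ℕ // P.Xspec x}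

instance (P : NFCseq) : MeasurableSpace P.Xpt := borel _

/-- `L_n^j`, the `j`-th level of tower `n`. -/
def level (P : NFCseq) (n j : ℕ) : Set P.Xpt := {x | x.1 n = some j}

/-- `C_n`, the union of all levels of tower `n`. -/
def tower (P : NFCseq) (n : ℕ) : Set P.Xpt := {x | x.1 n ≠ none}

theorem pmap_zero (P : NFCseq) (n : ℕ) : P.pmap n 0 = some 0 := by
  unfold pmap
  simp [P.hgt_pos n]

/-- The point `𝟎 = (0,0,…)`. -/
def zeroPt (P : NFCseq) : P.Xpt :=
  ⟨fun _ => some 0, fun n => by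
    show some 0 = (some 0).bind (P.pmap n)
    simp [P.pmap_zero n], 0, by simp⟩

/-- `t_n(x) ∈ {1,2,3}`: the subcolumn of tower `n` to which `x` belongs
(junk value `0` if `x` is not in tower `n+1`). -/
def tcol (P : NFCseq) (n : ℕ) (x : P.Xpt) : ℕ :=
  match x.1 (n + 1) with
  | none => 0
  | some j =>
    if j < P.hgt n + P.spa n then 1
    else if j < 2 * P.hgt n + 2 * P.spa n + 1 then 2
    else 3

/-- The index (from `0` to `3^(m-n) - 1`, ordered from bottom to top of tower `m`) of the
occurrence of tower `n` inside tower `m` to which `x` belongs. -/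
def occIdx (P : NFCseq) (n m : ℕ) (x : P.Xpt) : ℕ :=
  ∑ r ∈ Finset.Ico n m, (P.tcol r x - 1) * 3 ^ (r - n)

/-- `x` belongs to one of the first hundred occurrences of tower `n` inside tower `m`. -/
def inFirstHundred (P : NFCseq) (n m : ℕ) (x : P.Xpt) : Prop := P.occIdx n m x < 100

/-- `x` belongs to one of the last hundred occurrences of tower `n` inside tower `m`. -/
def inLastHundred (P : NFCseq) (n m : ℕ) (x : P.Xpt) : Prop :=
  3 ^ (m - n) ≤ P.occIdx n m x + 100

end NFCseq

/-- The nearly finite Chacon transformation `T` together with its invariant measure `μ`. -/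
structure NFC extends NFCseq where
  T : toNFCseq.Xpt → toNFCseq.Xpt
  μ : Measure toNFCseq.Xpt
  T_inj : Function.Injective T
  T_range : Set.range T = {toNFCseq.zeroPt}ᶜ
  T_up : ∀ x : toNFCseq.Xpt, ∃ N : ℕ, ∀ n, N ≤ n →
    ∃ j : ℕ, x.1 n = some j ∧ (T x).1 n = some (j + 1)
  T_meas : Measurable T
  μ_level : ∀ n j : ℕ, j < toNFCseq.hgt n →
    μ (toNFCseq.level n j) = (3 : ℝ≥0∞)⁻¹ ^ n
  μ_pres : MeasurePreserving T μ μ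
  μ_sfin : SigmaFinite μ

namespace NFC

/-- `X^d`. -/
abbrev Xd (S : NFC) (d : ℕ) : Type := Fin d → S.toNFCseq.Xpt

/-- The Cartesian power `T^{×d}`. -/
def Td (S : NFC) (d : ℕ) : S.Xd d → S.Xd d := fun y i => S.T (y i)

/-- `C_n^d`. -/
def towerD (S : NFC) (d n : ℕ) : Set (S.Xd d) := {y | ∀ i, y i ∈ S.toNFCseq.tower n}

/-- `B` is an `n`-box. -/
def IsNBox (S : NFC) (d n : ℕ) (B : Set (S.Xd d)) : Prop :=
  ∃ v : Fin d → ℕ, (∀ i, v i < S.toNFCseq.hgt n) ∧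
    B = {y : S.Xd d | ∀ i, y i ∈ S.toNFCseq.level n (v i)}

/-- A measure on `X^d` is Radon iff it is finite on each `C_n^d`. -/
def IsRadon (S : NFC) (d : ℕ) (σ : Measure (S.Xd d)) : Prop :=
  ∀ n, σ (S.towerD d n) < ⊤

/-- `σ` is `T^{×d}`-invariant. -/
def InvariantD (S : NFC) (d : ℕ) (σ : Measure (S.Xd d)) : Prop :=
  ∀ A : Set (S.Xd d), MeasurableSet A → σ ((S.Td d) ⁻¹' A) = σ A

/-- `T^{-e} A`, the preimage of `A` under `T^e` for `e ∈ ℤ` (image for negative `e`). -/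
def preT (S : NFC) : ℤ → Set S.toNFCseq.Xpt → Set S.toNFCseq.Xpt
  | Int.ofNat k, A => S.T^[k] ⁻¹' A
  | Int.negSucc k, A => S.T^[k + 1] '' A

/-- `σ` is a graph measure arising from powers of `T` on `X^ι`:
`σ(∏ᵢ Aᵢ) = α · μ(⋂ᵢ T^{-eᵢ} Aᵢ)`. -/
def IsGraphMeasure (S : NFC) {ι : Type} (σ : Measure (ι → S.toNFCseq.Xpt)) : Prop :=
  ∃ α : ℝ≥0∞, 0 < α ∧ α ≠ ⊤ ∧ ∃ e : ι → ℤ,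
    ∀ A : ι → Set S.toNFCseq.Xpt, (∀ i, MeasurableSet (A i)) →
      σ (Set.univ.pi A) = α * S.μ (⋂ i, S.preT (e i) (A i))

/-- `σ = σ^{D_1} ⊗ ⋯ ⊗ σ^{D_r}` for a partition `D_1, …, D_r` of `{1,…,d}` where each
`σ^{D_j}` is a graph measure on `X^{D_j}` arising from powers of `T`. -/
def IsProductOfGraphMeasures (S : NFC) (d : ℕ) (σ : Measure (S.Xd d)) : Prop :=
  ∃ (r : ℕ) (D : Fin r → Finset (Fin d)),
    (∀ j, (D j).Nonempty) ∧
    (∀ j j', j ≠ j' → Disjoint (D j) (D j')) ∧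
    (∀ i : Fin d, ∃ j, i ∈ D j) ∧
    ∃ σD : ∀ j : Fin r, Measure ({i // i ∈ D j} → S.toNFCseq.Xpt),
      (∀ j, S.IsGraphMeasure (σD j)) ∧
      ∀ A : Fin d → Set S.toNFCseq.Xpt, (∀ i, MeasurableSet (A i)) →
        σ (Set.univ.pi A) =
          ∏ j : Fin r, σD j (Set.univ.pi fun i : {i // i ∈ D j} => A i.1)

end NFC


/-- `(T)^j W` for `j ∈ ℤ`: forward images for `j ≥ 0`, preimages for `j < 0`. -/
def iterZ {α : Type*} (f : α → α) : ℤ → Set α → Set α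
  | Int.ofNat k, A => f^[k] '' A
  | Int.negSucc k, A => f^[k + 1] ⁻¹' A

namespace NFC

/-- `σ` is totally dissipative: there is a wandering set `W` whose `ℤ`-orbit covers
`X^d` up to a `σ`-null set. -/
def TotallyDissipative (S : NFC) (d : ℕ) (σ : Measure (S.Xd d)) : Prop :=
  ∃ W : Set (S.Xd d), MeasurableSet W ∧
    (∀ j j' : ℤ, j ≠ j' → Disjoint (iterZ (S.Td d) j W) (iterZ (S.Td d) j' W)) ∧
    σ (⋃ j : ℤ, iterZ (S.Td d) j W)ᶜ = 0

/-- The ring `𝓡` of finite unions of `n`-boxes. -/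
def BoxRing (S : NFC) (d : ℕ) : Set (Set (S.Xd d)) :=
  {B | ∃ n : ℕ, ∃ 𝔅 : Finset (Set (S.Xd d)), (∀ b ∈ 𝔅, S.IsNBox d n b) ∧ B = ⋃₀ ↑𝔅}

/-- Convergence of a sequence of Radon measures on `X^d`. -/
def RTendsto (S : NFC) (d : ℕ) (σk : ℕ → Measure (S.Xd d)) (σ : Measure (S.Xd d)) : Prop :=
  ∀ n : ℕ, 0 < σ (S.towerD d n) →
    (∀ᶠ k in atTop, 0 < σk k (S.towerD d n)) ∧
    ∀ B : Set (S.Xd d), S.IsNBox d n B →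
      Tendsto (fun k => σk k B / σk k (S.towerD d n)) atTop
        (𝓝 (σ B / σ (S.towerD d n)))

/-- The edge `∂C_n^d` of `C_n^d`. -/
def edgeD (S : NFC) (d n : ℕ) : Set (S.Xd d) :=
  {y | y ∈ S.towerD d n ∧ ∃ i, y i ∈ S.toNFCseq.level n 0 ∨
    y i ∈ S.toNFCseq.level n (S.toNFCseq.hgt n - 1)}

/-- `Ω_m`: the union of all `m`-boxes `L_m^{j_1} × ⋯ × L_m^{j_d}` with `j_i ≠ 0` for all `i`. -/
def OmegaD (S : NFC) (d m : ℕ) : Set (S.Xd d) :=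
  {y | ∀ i, ∃ j : ℕ, j ≠ 0 ∧ j < S.toNFCseq.hgt m ∧ y i ∈ S.toNFCseq.level m j}

/-- A twisting transformation on `X^d`: it applies `T` to the coordinates in a nonempty
proper subset `G_1 ⊆ {1,…,d}` and the identity to the others. -/
def IsTwist (S : NFC) (d : ℕ) (Sw : S.Xd d → S.Xd d) : Prop :=
  ∃ G : Fin d → Bool, (∃ i, G i = true) ∧ (∃ i, G i = false) ∧
    ∀ (y : S.Xd d) (i : Fin d), Sw y i = if G i then S.T (y i) else y i

/-- The empirical measure `γ_J = ∑_{j ∈ J} δ_{(T^{×d})^j x}` along a two-sided orbit `o`. -/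
def emp (S : NFC) (d : ℕ) (o : ℤ → S.Xd d) (J : Finset ℤ) : Measure (S.Xd d) :=
  ∑ j ∈ J, Measure.dirac (o j)

end NFC

/-- `J` is a (nonempty finite) interval of `ℤ`. -/
def IsIntervalZ (J : Finset ℤ) : Prop := ∃ a b : ℤ, a ≤ b ∧ J = Finset.Icc a b

namespace NFC

/-- `J` is an `n`-crossing for the orbit `o` of a point of `X^d`: a maximal interval on which
the orbit stays in `C_n^d` with all the `t_n(T^j x_i)` constant. -/
def IsCrossing (S : NFC) (d : ℕ) (o : ℤ → S.Xd d) (n : ℕ) (J : Finset ℤ) : Prop :=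
  IsIntervalZ J ∧
  (∀ j ∈ J, o j ∈ S.towerD d n) ∧
  (∀ i : Fin d, ∀ j ∈ J, ∀ j' ∈ J, S.toNFCseq.tcol n (o j i) = S.toNFCseq.tcol n (o j' i)) ∧
  ∀ J' : Finset ℤ, J ⊆ J' → IsIntervalZ J' →
    (∀ j ∈ J', o j ∈ S.towerD d n) →
    (∀ i : Fin d, ∀ j ∈ J', ∀ j' ∈ J', S.toNFCseq.tcol n (o j i) = S.toNFCseq.tcol n (o j' i)) →
    J' = J

/-- An `n`-crossing is synchronized if `t_n(T^j x_1) = ⋯ = t_n(T^j x_d)` on it. -/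
def IsSync (S : NFC) (d : ℕ) (o : ℤ → S.Xd d) (n : ℕ) (J : Finset ℤ) : Prop :=
  ∀ j ∈ J, ∀ i i' : Fin d, S.toNFCseq.tcol n (o j i) = S.toNFCseq.tcol n (o j i')

end NFC

/-- The interval `I_n` of length `h_n` centered at `0`. -/
def Imid (P : NFCseq) (n : ℕ) : Finset ℤ :=
  Finset.Icc (-((P.hgt n / 2 : ℕ) : ℤ)) (-((P.hgt n / 2 : ℕ) : ℤ) + P.hgt n - 1)

namespace NFC

/-- A substantial `n`-crossing: an `n`-crossing whose intersection with `I_n` has at least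
`η·h_n` elements. -/
def IsSubstantial (S : NFC) (d : ℕ) (o : ℤ → S.Xd d) (η : ℝ) (n : ℕ) (J : Finset ℤ) : Prop :=
  S.IsCrossing d o n J ∧ η * S.toNFCseq.hgt n ≤ ((J ∩ Imid S.toNFCseq n).card : ℝ)

/-- `x_i` climbs into tower `n` along the interval `I`. -/
def Climbs (S : NFC) (d : ℕ) (o : ℤ → S.Xd d) (i : Fin d) (n : ℕ) (I : Finset ℤ) : Prop :=
  (∀ j ∈ I, (o j) i ∈ S.toNFCseq.tower n) ∧
  ¬ ∃ j : ℤ, j ∈ I ∧ j + 1 ∈ I ∧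
      (o j) i ∈ S.toNFCseq.level n (S.toNFCseq.hgt n - 1) ∧
      (o (j + 1)) i ∈ S.toNFCseq.level n 0

end NFC

/-- The nearly finite Chacon system together with the conull set `X_∞` and the function
`x ↦ ℓ(x)` of Lemma 2.3. -/
structure NFCX extends NFC where
  Xinf : Set toNFCseq.Xpt
  ellx : toNFCseq.Xpt → ℕ
  Xinf_conull : μ Xinfᶜ = 0
  Xinf_spec : ∀ x ∈ Xinf, ∀ ℓ : ℕ, ellx x ≤ ℓ → ∀ n : ℕ,
    nseq (ℓ - 1) ≤ n → n + ℓ ≤ nseq ℓ →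
      x ∈ toNFCseq.tower n ∧ ¬ toNFCseq.inFirstHundred n (nseq ℓ) x ∧
        ¬ toNFCseq.inLastHundred n (nseq ℓ) x

namespace NFCX

/-- `o` is the two-sided orbit of a `σ`-typical point `x = o 0` (satisfying
conditions (1), (2) and (3) of Section 3.4 of the paper). -/
def IsTypicalOrbit (S : NFCX) (d : ℕ) (σ : Measure (S.toNFC.Xd d))
    (o : ℤ → S.toNFC.Xd d) : Prop :=
  (∀ j : ℤ, S.toNFC.Td d (o j) = o (j + 1)) ∧
  (∀ j : ℤ, ∀ n : ℕ, 0 < σ (S.toNFC.towerD d n) →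
    ∀ B : Set (S.toNFC.Xd d), S.toNFC.IsNBox d n B →
    ∀ a b : ℕ → ℤ, (∀ k, a k ≤ 0) → (∀ k, 0 ≤ b k) →
      Tendsto (fun k => b k - a k) atTop atTop →
      Tendsto (fun k =>
          (((Finset.Icc (a k) (b k)).filter (fun j' => o (j + j') ∈ B)).card : ℝ) /
            (((Finset.Icc (a k) (b k)).filter
              (fun j' => o (j + j') ∈ S.toNFC.towerD d n)).card : ℝ))
        atTop (𝓝 ((σ B).toReal / (σ (S.toNFC.towerD d n)).toReal))) ∧
  (∀ n : ℕ, ∀ B : Set (S.toNFC.Xd d), S.toNFC.IsNBox d n B → o 0 ∈ B → 0 < σ B) ∧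
  (∀ i : Fin d, (o 0) i ∈ S.Xinf)

end NFCX

/-! ## Subsets of `ℤ` of order `ℓ` inside an interval -/

/-- A piece of `F ∩ I`: a maximal interval included in `F ∩ I`. -/
def IsPieceZ (F : Set ℤ) (I : Finset ℤ) (J : Finset ℤ) : Prop :=
  IsIntervalZ J ∧ (↑J : Set ℤ) ⊆ F ∩ ↑I ∧
    ∀ J' : Finset ℤ, IsIntervalZ J' → (↑J' : Set ℤ) ⊆ F ∩ ↑I → J ⊆ J' → J' = J

/-- A hole of `F ∩ I`: a maximal interval included in `I \ F`. -/
def IsHoleZ (F : Set ℤ) (I : Finset ℤ) (J : Finset ℤ) : Prop :=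
  IsIntervalZ J ∧ (↑J : Set ℤ) ⊆ (↑I : Set ℤ) \ F ∧
    ∀ J' : Finset ℤ, IsIntervalZ J' → (↑J' : Set ℤ) ⊆ (↑I : Set ℤ) \ F → J ⊆ J' → J' = J

/-- Each hole of `F ∩ I` has size at most `s`. -/
def HolesSmall (F : Set ℤ) (I : Finset ℤ) (s : ℕ) : Prop :=
  ∀ H : Finset ℤ, IsHoleZ F I H → H.card ≤ s

/-- Two consecutive holes of `F ∩ I` are always separated by a piece of size at least `c`. -/
def HolesSeparated (F : Set ℤ) (I : Finset ℤ) (c : ℕ) : Prop :=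
  ∀ H₁ H₂ : Finset ℤ, IsHoleZ F I H₁ → IsHoleZ F I H₂ →
    (∀ a ∈ H₁, ∀ b ∈ H₂, a < b) →
    ∃ J : Finset ℤ, IsPieceZ F I J ∧ c ≤ J.card ∧ ∀ a ∈ H₁, ∀ b ∈ H₂, ∀ x ∈ J, a < x ∧ x < b

/-- `F` is of order `ℓ ≥ 1` inside the interval `I`, with respect to the sequences `c`, `s`. -/
def IsOrder (c s : ℕ → ℕ) : ℕ → Set ℤ → Finset ℤ → Prop
  | 0, _, _ => False
  | 1, F, I => HolesSmall F I (s 1) ∧ HolesSeparated F I (c 1)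
  | (ℓ + 2), F, I => ∃ F' : Set ℤ, F ⊆ F' ∧ HolesSmall F' I (s (ℓ + 2)) ∧
      HolesSeparated F' I (c (ℓ + 2)) ∧
      ∀ J : Finset ℤ, IsPieceZ F' I J → IsOrder c s (ℓ + 1) F J

/-- `p_1`: the smallest integer such that `3^{p_1} > 2d+1` and `p_1 > d`. -/
def pOne (d : ℕ) : ℕ := sInf {p : ℕ | 2 * d + 1 < 3 ^ p ∧ d < p}

/-- `p_2`: the smallest integer such that `1/3^{p_2} < η/3`. -/
def pTwo (η : ℝ) : ℕ := sInf {p : ℕ | ((3 : ℝ) ^ p)⁻¹ < η / 3}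

/-! ### Combinatorics of the towers -/

namespace NFCseq

variable (P : NFCseq)

theorem hgt_succ (n : ℕ) : P.hgt (n + 1) = 3 * P.hgt n + 3 * P.spa n + 1 := by
  rw [hgt, spa]

theorem hgt_strictMono : StrictMono P.hgt :=
  strictMono_nat_of_lt_succ fun n => by rw [hgt_succ]; omega

theorem nseq_strictMono : StrictMono P.nseq :=
  strictMono_nat_of_lt_succ fun n => by
    have := P.nseq_growth (n + 1) (by omega)
    simp only [Nat.add_sub_cancel] at this
    omega

/-- No long spacers are inserted at a step strictly between two consecutive terms of `(n_ℓ)`. -/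
theorem spa_eq_zero {L r : ℕ} (h1 : P.nseq (L - 1) < r) (h2 : r < P.nseq L) : P.spa r = 0 := by
  rw [spa, dif_neg]
  rintro ⟨k, -, hk⟩
  subst hk
  have h3 := P.nseq_strictMono.lt_iff_lt.1 h1
  have h4 := P.nseq_strictMono.lt_iff_lt.1 h2
  omega

theorem pmap_lt {n a j : ℕ} (h : P.pmap n a = some j) : j < P.hgt n := by
  unfold pmap at h
  split_ifs at h <;> simp only [Option.some.injEq] at h <;> omega

/-- `p_n` commutes with moving one level up inside a copy of tower `n`; the new level is still
in tower `n + 1`. -/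
theorem pmap_up {n a j : ℕ} (h : P.pmap n a = some j) (hj : j + 1 < P.hgt n) :
    P.pmap n (a + 1) = some (j + 1) ∧ a + 1 < P.hgt (n + 1) := by
  rw [hgt_succ]
  unfold pmap at h ⊢
  split_ifs at h ⊢ <;>
    simp only [Option.some.injEq, false_and] at h ⊢ <;> omega

/-- `p_n` commutes with moving one level down inside a copy of tower `n`. -/
theorem pmap_down {n a j : ℕ} (h : P.pmap n a = some j) (hj : 1 ≤ j) :
    P.pmap n (a - 1) = some (j - 1) ∧ 1 ≤ a := by
  unfold pmap at h ⊢
  split_ifs at h ⊢ <;>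
    simp only [Option.some.injEq, false_and] at h ⊢ <;> omega

variable {P}

theorem apply_pred {x : P.Xpt} {n a : ℕ} (h : x.1 (n + 1) = some a) : x.1 n = P.pmap n a := by
  rw [x.2.1 n, h]; rfl

theorem exists_succ {x : P.Xpt} {n a : ℕ} (h : x.1 n = some a) :
    ∃ b, x.1 (n + 1) = some b ∧ P.pmap n b = some a := by
  have h1 := x.2.1 n
  rw [h] at h1
  exact Option.bind_eq_some_iff.1 h1.symm

theorem lt_hgt {x : P.Xpt} {n a : ℕ} (h : x.1 n = some a) : a < P.hgt n := by
  obtain ⟨b, -, hb⟩ := exists_succ h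
  exact P.pmap_lt hb

/-- The first `h_m` levels of a taller tower form its first copy of tower `m`. -/
theorem apply_of_lt {x : P.Xpt} {m r a : ℕ} (hmr : m ≤ r) (h : x.1 r = some a)
    (ha : a < P.hgt m) : x.1 m = some a := by
  induction r, hmr using Nat.le_induction with
  | base => exact h
  | succ r hr ih =>
    apply ih
    rw [apply_pred h, pmap, if_pos (ha.trans_le (P.hgt_strictMono.monotone hr))]

/-- If `y` is one level above `x` in tower `N`, then so it is in every lower tower in which `x`
lies outside the top level. -/
theorem up_of_up {x y : P.Xpt} {n N j : ℕ} (hnN : n ≤ N) (hx : x.1 N = some j)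
    (hy : y.1 N = some (j + 1)) {a : ℕ} (ha : x.1 n = some a) (hlt : a + 1 < P.hgt n) :
    y.1 n = some (a + 1) := by
  induction hnN using Nat.decreasingInduction generalizing a with
  | self =>
    rw [hx] at ha
    rw [hy, Option.some.inj ha]
  | of_succ n hn ih =>
    obtain ⟨b, hb, hba⟩ := exists_succ ha
    have h := P.pmap_up hba hlt
    rw [apply_pred (ih hb h.2), h.1]

/-- If `y` is one level below `x` in tower `N`, then so it is in every lower tower in which `x`
lies outside the bottom level. -/
theorem down_of_down {x y : P.Xpt} {n N j : ℕ} (hnN : n ≤ N) (hx : x.1 N = some j)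
    (hy : y.1 N = some (j - 1)) {a : ℕ} (ha : x.1 n = some a) (hpos : 1 ≤ a) :
    y.1 n = some (a - 1) := by
  induction hnN using Nat.decreasingInduction generalizing a with
  | self =>
    rw [hx] at ha
    rw [hy, Option.some.inj ha]
  | of_succ n hn ih =>
    obtain ⟨b, hb, hba⟩ := exists_succ ha
    have h := P.pmap_down hba hpos
    rw [apply_pred (ih hb h.2), h.1]

/-- Two points in the same level of tower `N` are in the same level of every lower tower. -/
theorem eq_of_eq {x y : P.Xpt} {n N : ℕ} (hnN : n ≤ N) (h : y.1 N = x.1 N) : y.1 n = x.1 n := by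
  induction hnN using Nat.decreasingInduction with
  | self => exact h
  | of_succ n hn ih => rw [x.2.1 n, y.2.1 n, ih]

/-- Position in tower `r + 1` of a point of `C_r`, when only the Chacon spacer is inserted. -/
theorem tcol_cases {x : P.Xpt} {r a : ℕ} (hs : P.spa r = 0) (h : x.1 r = some a) :
    (P.tcol r x = 1 ∧ x.1 (r + 1) = some a) ∨
    (P.tcol r x = 2 ∧ x.1 (r + 1) = some (P.hgt r + a)) ∨
    (P.tcol r x = 3 ∧ x.1 (r + 1) = some (2 * P.hgt r + 1 + a)) := by
  obtain ⟨b, hb, hba⟩ := exists_succ h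
  have e : P.tcol r x = if b < P.hgt r + P.spa r then 1
      else if b < 2 * P.hgt r + 2 * P.spa r + 1 then 2 else 3 := by
    simp only [tcol, hb]
  rw [e, hb]
  unfold pmap at hba
  clear e hb h
  rw [hs] at hba ⊢
  split_ifs at hba ⊢ <;> simp at hba ⊢ <;> omega

/-- A point in the third subcolumn at every step from `m` to `r` is in the top copy of tower `m`
inside tower `r`. -/
theorem apply_of_tcol_three {x : P.Xpt} {m r j : ℕ} (hmr : m ≤ r) (hx : x.1 m = some j)
    (hs : ∀ q, m ≤ q → q < r → P.spa q = 0) (ht : ∀ q, m ≤ q → q < r → P.tcol q x = 3) :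
    x.1 r = some (P.hgt r - P.hgt m + j) := by
  induction r, hmr using Nat.le_induction with
  | base => rw [hx]; simp
  | succ r hr ih =>
    have hr' := ih (fun q h1 h2 => hs q h1 (by omega)) (fun q h1 h2 => ht q h1 (by omega))
    have h0 := hs r hr (by omega)
    have hm := P.hgt_strictMono.monotone hr
    have h3 := ht r hr (by omega)
    rcases tcol_cases h0 hr' with h | h | h
    · omega
    · omega
    · rw [h.2, hgt_succ, h0]
      congr 1
      omega

/-- A point outside the last occurrence of tower `m` inside tower `N` leaves the third subcolumn
at some step. -/
theorem exists_tcol_ne_three {x : P.Xpt} {m N : ℕ} (h : ¬ P.inLastHundred m N x) :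
    ∃ r, m ≤ r ∧ r < N ∧ P.tcol r x ≠ 3 := by
  by_contra! hc
  apply h
  have e : P.occIdx m N x = 2 * ∑ i ∈ Finset.range (N - m), 3 ^ i := by
    rw [occIdx, Finset.mul_sum, Finset.sum_Ico_eq_sum_range]
    refine Finset.sum_congr rfl fun i hi => ?_
    have := Finset.mem_range.1 hi
    rw [hc (m + i) (by omega) (by omega), Nat.add_sub_cancel_left]
  have g := Nat.geomSum_eq (m := 3) (by norm_num) (N - m)
  have hd : 2 * ((3 ^ (N - m) - 1) / 2) = 3 ^ (N - m) - 1 := by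
    apply Nat.mul_div_cancel'
    simpa using Nat.sub_dvd_pow_sub_pow 3 1 (N - m)
  rw [inLastHundred, e, g]
  norm_num
  omega

/-- A point in the bottom level of tower `N + 1` is in the first occurrence of tower `n` inside
tower `N`. -/
theorem inFirstHundred_of_zero {x : P.Xpt} {n N : ℕ} (h : x.1 (N + 1) = some 0) :
    P.inFirstHundred n N x := by
  have e : P.occIdx n N x = 0 := by
    rw [occIdx]
    refine Finset.sum_eq_zero fun r hr => ?_
    have hr' := Finset.mem_Ico.1 hr
    have h0 : x.1 (r + 1) = some 0 := apply_of_lt (by omega) h (P.hgt_pos _)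
    have hp := P.hgt_pos r
    have : P.tcol r x = 1 := by
      simp only [tcol, h0]
      rw [if_pos (by omega)]
    simp [this]
  rw [inFirstHundred, e]
  norm_num

end NFCseq

/-! ### Action of `T` on the levels -/

namespace NFC

open NFCseq

/-- Inside tower `n`, the transformation `T` moves each point one level up. -/
theorem T_apply (S : NFC) {x : S.toNFCseq.Xpt} {n a : ℕ} (h : x.1 n = some a)
    (ha : a + 1 < S.toNFCseq.hgt n) : (S.T x).1 n = some (a + 1) := by
  obtain ⟨N, hN⟩ := S.T_up x
  obtain ⟨j, h1, h2⟩ := hN (max n N) (le_max_right _ _)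
  exact up_of_up (le_max_left _ _) h1 h2 h ha

theorem iterate_apply (S : NFC) {x : S.toNFCseq.Xpt} {n a : ℕ} (h : x.1 n = some a) (k : ℕ)
    (hk : a + k < S.toNFCseq.hgt n) : (S.T^[k] x).1 n = some (a + k) := by
  induction k with
  | zero => simpa using h
  | succ k ih =>
    rw [Function.iterate_succ_apply']
    exact S.T_apply (ih (by omega)) (by omega)

/-- If no long spacers are inserted between towers `m` and `N`, then outside the last occurrence
of tower `m` inside tower `N` (and outside the bottom level) `T^{h_m}` moves a point of tower `m`
down by at most one level of that tower. -/
theorem iterate_hgt (S : NFC) {x : S.toNFCseq.Xpt} {m N j : ℕ} (hx : x.1 m = some j)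
    (hj : 1 ≤ j) (hs : ∀ q, m ≤ q → q < N → S.toNFCseq.spa q = 0)
    (hl : ¬ S.toNFCseq.inLastHundred m N x) :
    (S.T^[S.toNFCseq.hgt m] x).1 m = some j ∨ (S.T^[S.toNFCseq.hgt m] x).1 m = some (j - 1) := by
  -- `r` is the first step at which `x` is not in the third subcolumn
  obtain ⟨r, ⟨hmr, hrN, ht⟩, hmin'⟩ : ∃ r, (m ≤ r ∧ r < N ∧ S.toNFCseq.tcol r x ≠ 3) ∧
      ∀ q < r, ¬ (m ≤ q ∧ q < N ∧ S.toNFCseq.tcol q x ≠ 3) :=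
    ⟨Nat.find (exists_tcol_ne_three hl), Nat.find_spec (exists_tcol_ne_three hl),
      fun q hq => Nat.find_min (exists_tcol_ne_three hl) hq⟩
  have hmin : ∀ q, m ≤ q → q < r → S.toNFCseq.tcol q x = 3 := fun q h1 h2 => by
    by_contra h3
    exact hmin' q h2 ⟨h1, by omega, h3⟩
  have hxr := apply_of_tcol_three hmr hx (fun q h1 h2 => hs q h1 (by omega)) hmin
  have h0 : S.toNFCseq.spa r = 0 := hs r hmr hrN
  have hle : S.toNFCseq.hgt m ≤ S.toNFCseq.hgt r := S.toNFCseq.hgt_strictMono.monotone hmr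
  have hjm := lt_hgt hx
  have hsucc := S.toNFCseq.hgt_succ r
  rcases tcol_cases h0 hxr with h | h | h
  · left
    have h1 := S.iterate_apply h.2 (S.toNFCseq.hgt m) (by omega)
    apply apply_of_lt hmr _ hjm
    rw [apply_pred h1, NFCseq.pmap, if_neg (by omega), if_neg (by omega), if_pos (by omega)]
    congr 1
    omega
  · right
    have h1 := S.iterate_apply h.2 (S.toNFCseq.hgt m) (by omega)
    apply apply_of_lt hmr _ (by omega)
    rw [apply_pred h1, NFCseq.pmap, if_neg (by omega), if_neg (by omega), if_neg (by omega),
      if_neg (by omega), if_pos (by omega)]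
    congr 1
    omega
  · exact absurd h.1 ht

theorem Td_iterate (S : NFC) (d k : ℕ) (x : S.Xd d) (i : Fin d) :
    ((S.Td d)^[k] x) i = S.T^[k] (x i) := by
  induction k with
  | zero => rfl
  | succ k ih => rw [Function.iterate_succ_apply', Function.iterate_succ_apply', ← ih]; rfl

end NFC

/-- For each `x = (x_1,…,x_d) ∈ X_∞^d` and each
`ℓ > max{ℓ(x_i)}`, the set `{j ≥ 0 : (T^{×d})^j x ∈ C_{n_ℓ+1}^d}` is infinite. -/
theorem stmt10 (S : NFCX) (d : ℕ) (hd : 1 ≤ d) (x : S.toNFC.Xd d)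
    (hx : ∀ i, x i ∈ S.Xinf) (ℓ : ℕ) (hℓ : ∀ i, S.ellx (x i) < ℓ) :
    {j : ℕ | (S.toNFC.Td d)^[j] x ∈ S.toNFC.towerD d (S.nseq ℓ + 1)}.Infinite := by
  open NFCseq in
  have hℓ1 : 1 ≤ ℓ := by
    have := hℓ ⟨0, hd⟩
    omega
  refine Set.infinite_of_forall_exists_gt fun a => ?_
  set L := max a ℓ + 1 with hL
  have hgr := S.nseq_growth L (by omega)
  have hgr0 := S.nseq_growth ℓ hℓ1
  have hmono : S.nseq ℓ ≤ S.nseq (L - 1) := S.nseq_strictMono.monotone (by omega)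
  set m := S.nseq L - L with hm
  refine ⟨S.hgt m, fun i => ?_, ?_⟩
  · rw [NFC.Td_iterate]
    have hi := hℓ i
    obtain ⟨-, hfirst, -⟩ := S.Xinf_spec (x i) (hx i) ℓ hi.le (S.nseq ℓ - ℓ)
      (by omega) (by omega)
    -- `x i` lies in tower `n_ℓ + 1`, by the defining property of `X_∞` at stage `ℓ + 1`
    have hgr1 := S.nseq_growth (ℓ + 1) (by omega)
    rw [Nat.add_sub_cancel] at hgr1
    obtain ⟨htow, -, -⟩ := S.Xinf_spec (x i) (hx i) (ℓ + 1) (by omega) (S.nseq ℓ + 1)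
      (by simp) (by omega)
    obtain ⟨b, hb⟩ := Option.ne_none_iff_exists'.1 htow
    have hb1 : 1 ≤ b := by
      by_contra h
      rw [show b = 0 by omega] at hb
      exact hfirst (inFirstHundred_of_zero hb)
    obtain ⟨htm, -, hlast⟩ := S.Xinf_spec (x i) (hx i) L (by omega) m (by omega) (by omega)
    obtain ⟨j, hj⟩ := Option.ne_none_iff_exists'.1 htm
    have hle : S.nseq ℓ + 1 ≤ m := by omega
    have hj1 : 1 ≤ j := by
      by_contra h
      rw [show j = 0 by omega] at hj
      have h0 := apply_of_lt hle hj (S.hgt_pos _)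
      rw [hb] at h0
      have := Option.some.inj h0
      omega
    have key := S.toNFC.iterate_hgt hj hj1
      (fun q h1 h2 => S.toNFCseq.spa_eq_zero (L := L) (by omega) h2) hlast
    rcases key with h | h
    · have h2 := eq_of_eq hle (h.trans hj.symm)
      show _ ≠ none
      rw [h2]
      exact htow
    · have h2 := down_of_down hle hj h hb hb1
      show _ ≠ none
      rw [h2]
      simp
  · have h1 : m ≤ S.hgt m := S.hgt_strictMono.le_apply
    omega
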